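/- Let (C_n,Π) be a parcycle with Π = {V_1,…,V_k}, k ≥ 2, and sink V_k. Then the toppling ideal I_Π equals the ideal generated by all 2×2 minors A_{1,i}A_{2,j} − A_{1,j}A_{2,i} (1 ≤ i < j ≤ k) of the matrix A_{(C_n,Π)}. Moreover, if |V_i| ≥ 2 for some i, then I_Π is a prime ideal of R_n, so R_n/I_Π is an integral domain. -/

import Mathlib

noncomputable section

open MvPolynomial

/-- Row of the Laplacian matrix of the `n`-cycle on `Fin n`
(vertex `j` of the paper corresponds to index `j-1`). -/
def cycLap (n : ℕ) [NeZero n] (j : Fin n) : Fin n → ℤ :=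
  fun l => if l = j then 2 else if l = j + 1 ∨ j = l + 1 then -1 else 0

/-- The cycle graph `C_n` on `Fin n`. -/
def cycleG (n : ℕ) [NeZero n] : SimpleGraph (Fin n) :=
  SimpleGraph.fromRel (fun i j => j = i + 1)

/-- The lattice ideal of a lattice `L ⊆ ℤ^n` in `K[x_1,…,x_n]`. -/
def latticeIdeal (n : ℕ) (K : Type*) [Field K] (L : Submodule ℤ (Fin n → ℤ)) :
    Ideal (MvPolynomial (Fin n) K) :=
  Ideal.span { f | ∃ u v : Fin n → ℕ,
    ((fun i => (u i : ℤ)) - fun i => (v i : ℤ)) ∈ L ∧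
    f = (∏ i, X i ^ u i) - ∏ i, X i ^ v i }

open Classical in
/-- The exponent vector of the monomial `x^{S → S̄}`: the `i`-th entry is the number
of edges of the cycle joining `i ∈ S` to the complement of `S`. -/
def outVec (n : ℕ) [NeZero n] (S : Set (Fin n)) (i : Fin n) : ℕ :=
  if i ∈ S then (if i + 1 ∈ S then 0 else 1) + (if i - 1 ∈ S then 0 else 1) else 0

/-- The monomial `x^{S → S̄}`. -/
def outMono (n : ℕ) (K : Type*) [NeZero n] [Field K] (S : Set (Fin n)) :
    MvPolynomial (Fin n) K :=
  ∏ i, X i ^ outVec n S i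

open Classical in
/-- `b_V = ∑_{j ∈ V} b_j`, sum of Laplacian rows over a set of vertices. -/
def bPart (n : ℕ) [NeZero n] (S : Set (Fin n)) : Fin n → ℤ :=
  ∑ j : Fin n, if j ∈ S then cycLap n j else 0

/-- The toppling ideal of the parcycle `(C_n, {V_1,…,V_k})`: the lattice ideal of the
lattice generated by the vectors `b_{V_j}`. -/
def topplingPar (n k : ℕ) (K : Type*) [NeZero n] [Field K] (V : Fin k → Set (Fin n)) :
    Ideal (MvPolynomial (Fin n) K) :=
  latticeIdeal n K (Submodule.span ℤ (Set.range fun j => bPart n (V j)))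

/-- `S` is a connected-parset of the parcycle `(C_n, V)`: a union of parts inducing a
connected subgraph of the cycle. -/
def isConnParset (n k : ℕ) [NeZero n] (V : Fin k → Set (Fin n)) (S : Set (Fin n)) : Prop :=
  (∃ T : Set (Fin k), S = ⋃ j ∈ T, V j) ∧ ((cycleG n).induce S).Connected

/-- The `G`-parking function ideal of a parcycle with sink part `V sink`. -/
def gparkIdeal (n k : ℕ) (K : Type*) [NeZero n] [Field K] (V : Fin k → Set (Fin n))
    (sink : Fin k) : Ideal (MvPolynomial (Fin n) K) :=
  Ideal.span { f | ∃ S : Set (Fin n), isConnParset n k V S ∧ ¬ V sink ⊆ S ∧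
    f = outMono n K S }

/-- The index in `Fin (n+1)` of the paper's variable `x_m`, `1 ≤ m ≤ n+1`. -/
def xIdx (n : ℕ) (m : ℕ) : Fin (n + 1) := ⟨(m - 1) % (n + 1), Nat.mod_lt _ (Nat.succ_pos n)⟩

/-- The defining ideal `P_n ⊆ K[x_1,…,x_{n+1}]` of the rational normal curve of degree `n`. -/
def Pideal (n : ℕ) (K : Type*) [Field K] : Ideal (MvPolynomial (Fin (n + 1)) K) :=
  Ideal.span { f | ∃ i j : ℕ, 2 ≤ i ∧ i ≤ j ∧ j ≤ n ∧
    f = X (xIdx n i) * X (xIdx n j) - X (xIdx n (i - 1)) * X (xIdx n (j + 1)) }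

open Classical in
/-- The `λ`-weight of an exponent vector. -/
def wdeg (n : ℕ) (lam : Fin n → ℕ) (u : Fin n →₀ ℕ) : ℕ := ∑ i, lam i * u i

open Classical in
/-- The `λ`-initial form of a polynomial: the sum of its terms of maximal `λ`-weight. -/
def initForm (n : ℕ) (K : Type*) [Field K] (lam : Fin n → ℕ) (f : MvPolynomial (Fin n) K) :
    MvPolynomial (Fin n) K :=
  ∑ u ∈ f.support.filter (fun u => wdeg n lam u = f.support.sup (wdeg n lam)),
    monomial u (coeff u f)

/-- The `λ`-initial ideal of an ideal. -/
def initIdeal (n : ℕ) (K : Type*) [Field K] (lam : Fin n → ℕ)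
    (I : Ideal (MvPolynomial (Fin n) K)) : Ideal (MvPolynomial (Fin n) K) :=
  Ideal.span { g | ∃ f ∈ I, f ≠ 0 ∧ g = initForm n K lam f }

section Helpers

open Classical in
/-- The successor relation: iterating a predecessor-closed property covers the whole cycle. -/
lemma cyc_pred_closed (n : ℕ) [NeZero n] (P : Fin n → Prop) (h : ∀ x, P x → P (x - 1))
    (x : Fin n) (hx : P x) (y : Fin n) : P y := by
  have key : ∀ m : ℕ, P (x - Fin.ofNat n m) := by
    intro m
    induction m with
    | zero => simpa using hx
    | succ m ih =>
      have := h _ ih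
      have e : x - Fin.ofNat n (m + 1) = x - Fin.ofNat n m - 1 := by
        rw [sub_sub]; congr 1
        ext; simp [Fin.val_add]
      rw [e]; exact this
  have := key (x - y).val
  simpa using this

lemma cyc_succ_closed (n : ℕ) [NeZero n] (P : Fin n → Prop) (h : ∀ x, P x → P (x + 1))
    (x : Fin n) (hx : P x) (y : Fin n) : P y := by
  by_contra hy
  exact cyc_pred_closed n (fun z => ¬ P z)
    (fun z hz hz' => hz (by simpa using h _ hz')) y hy x hx

lemma cyc_exists_pos (n : ℕ) [NeZero n] (a : Fin n → ℤ) (hs : ∑ x, a x = 0) (ha : a ≠ 0) :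
    ∃ x, 0 < a x ∧ a (x - 1) ≤ 0 := by
  by_contra! hcon
  by_cases hp : ∃ x, 0 < a x
  · obtain ⟨x, hx⟩ := hp
    have hall := cyc_pred_closed n (fun z => 0 < a z) hcon x hx
    have : 0 < ∑ x, a x := Finset.sum_pos (fun i _ => hall i) ⟨x, Finset.mem_univ _⟩
    omega
  · push Not at hp
    apply ha
    have := (Finset.sum_eq_zero_iff_of_nonpos (s := Finset.univ) (f := a)
      (fun i _ => hp i)).1 hs
    funext i
    exact this i (Finset.mem_univ _)

lemma cyc_exists_neg (n : ℕ) [NeZero n] (a : Fin n → ℤ) (hs : ∑ x, a x = 0) (ha : a ≠ 0) :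
    ∃ x, a x < 0 ∧ 0 ≤ a (x + 1) := by
  by_contra! hcon
  by_cases hp : ∃ x, a x < 0
  · obtain ⟨x, hx⟩ := hp
    have hall := cyc_succ_closed n (fun z => a z < 0) hcon x hx
    have : ∑ x, a x < 0 := Finset.sum_neg (fun i _ => hall i) ⟨x, Finset.mem_univ _⟩
    omega
  · push Not at hp
    apply ha
    have := (Finset.sum_eq_zero_iff_of_nonneg (s := Finset.univ) (f := a)
      (fun i _ => hp i)).1 hs
    funext i
    exact this i (Finset.mem_univ _)

/-- The monomial with a given exponent vector. -/
def monoV (n : ℕ) (K : Type*) [Field K] (u : Fin n → ℕ) : MvPolynomial (Fin n) K :=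
  ∏ i, X i ^ u i

lemma monoV_add (n : ℕ) (K : Type*) [Field K] (u v : Fin n → ℕ) :
    monoV n K (u + v) = monoV n K u * monoV n K v := by
  simp [monoV, pow_add, Finset.prod_mul_distrib]

lemma monoV_single (n : ℕ) (K : Type*) [Field K] (x : Fin n) :
    monoV n K (Pi.single x 1) = X x := by
  unfold monoV
  rw [Finset.prod_eq_single x]
  · simp
  · intro b _ hb; simp [Pi.single_eq_of_ne hb]
  · simp

/-- Connectivity of monomials in a lattice fibre by quadratic moves. -/
lemma cyc_moves (n : ℕ) (K : Type*) [NeZero n] [Field K] (E : Set (Fin n))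
    (J : Ideal (MvPolynomial (Fin n) K))
    (hJ : ∀ x y, x ∈ E → y ∈ E → (X x * X (y + 1) - X y * X (x + 1) : MvPolynomial (Fin n) K) ∈ J)
    (N : ℕ) : ∀ (a : Fin n → ℤ) (u v : Fin n → ℕ), (∑ x, (a x).natAbs = N) →
      (∀ x, a x ≠ 0 → x ∈ E) → ∑ x, a x = 0 →
      (∀ x, (u x : ℤ) - v x = a x - a (x - 1)) → monoV n K u - monoV n K v ∈ J := by
  induction N using Nat.strong_induction_on with
  | _ N ih =>
  intro a u v hN hE hs huv
  by_cases ha : a = 0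
  · have : u = v := by
      funext x
      have := huv x
      simp [ha] at this
      omega
    simp [this]
  obtain ⟨x, hx, hx'⟩ := cyc_exists_pos n a hs ha
  obtain ⟨y, hy, hy'⟩ := cyc_exists_neg n a hs ha
  have hxy : x ≠ y := by rintro rfl; omega
  have hle : ∀ i, (Pi.single x 1 + Pi.single (y + 1) 1 : Fin n → ℕ) i ≤ u i := by
    intro i
    have h1 := huv x
    have h2 := huv (y + 1)
    rw [add_sub_cancel_right] at h2
    simp only [Pi.add_apply, Pi.single_apply]
    by_cases i1 : i = x
    · subst i1
      by_cases i2 : i = y + 1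
      · have : i - 1 = y := by rw [i2, add_sub_cancel_right]
        rw [this] at h1
        rw [if_pos rfl, if_pos i2]; omega
      · rw [if_pos rfl, if_neg i2]; omega
    · by_cases i2 : i = y + 1
      · rw [if_neg i1, if_pos i2, i2]; omega
      · rw [if_neg i1, if_neg i2]; omega
  obtain ⟨r, hr⟩ : ∃ r : Fin n → ℕ, u = r + (Pi.single x 1 + Pi.single (y + 1) 1) :=
    ⟨fun i => u i - (Pi.single x 1 + Pi.single (y + 1) 1 : Fin n → ℕ) i, by
      funext i; rw [Pi.add_apply]; have := hle i; omega⟩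
  set u' : Fin n → ℕ := r + (Pi.single y 1 + Pi.single (x + 1) 1) with hu'
  set a' : Fin n → ℤ := fun i => a i - (if i = x then 1 else 0) + (if i = y then 1 else 0) with ha'
  have hmem : monoV n K u' - monoV n K v ∈ J := by
    refine ih (∑ x, (a' x).natAbs) ?_ a' u' v rfl ?_ ?_ ?_
    · rw [← hN]
      apply Finset.sum_lt_sum
      · intro i _
        simp only [ha']
        by_cases i1 : i = x
        · subst i1; rw [if_pos rfl, if_neg hxy]; omega
        · rw [if_neg i1]
          by_cases i2 : i = y
          · subst i2; rw [if_pos rfl]; omega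
          · rw [if_neg i2]; omega
      · refine ⟨x, Finset.mem_univ _, ?_⟩
        simp only [ha']
        rw [if_pos trivial, if_neg hxy]; omega
    · intro i hi
      by_cases i1 : i = x
      · exact hE i (by rw [i1]; omega)
      · by_cases i2 : i = y
        · exact hE i (by rw [i2]; omega)
        · simp only [ha', if_neg i1, if_neg i2] at hi
          exact hE i (by omega)
    · simp only [ha', Finset.sum_add_distrib, Finset.sum_sub_distrib, hs]
      simp
    · intro i
      have h := huv i
      rw [hr] at h
      simp only [ha', hu', Pi.add_apply, Pi.single_apply] at h ⊢
      have e1 : (i - 1 = x) ↔ (i = x + 1) := sub_eq_iff_eq_add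
      have e2 : (i - 1 = y) ↔ (i = y + 1) := sub_eq_iff_eq_add
      simp only [e1, e2]
      push_cast at h ⊢
      linarith
  have hd : monoV n K u - monoV n K u' ∈ J := by
    have : monoV n K u - monoV n K u' = monoV n K r * (X x * X (y + 1) - X y * X (x + 1)) := by
      rw [hr, hu']
      simp only [monoV_add, monoV_single]
      ring
    rw [this]
    exact J.mul_mem_left _ (hJ x y (hE x (by omega)) (hE y (by omega)))
  have := J.add_mem hd hmem
  simpa using this

/-- Position on the cycle cut after `x0`. -/
def cycPos (n : ℕ) [NeZero n] (x0 x : Fin n) : ℕ := (x - (x0 + 1)).val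

lemma cycPos_inj (n : ℕ) [NeZero n] (x0 x y : Fin n) (h : cycPos n x0 x = cycPos n x0 y) :
    x = y := by
  have := Fin.ext h
  simpa using this

lemma cycPos_last (n : ℕ) [NeZero n] (x0 : Fin n) : cycPos n x0 x0 = n - 1 := by
  have hn := NeZero.pos n
  obtain ⟨m, rfl⟩ : ∃ m, n = m + 1 := ⟨n - 1, by omega⟩
  have : x0 - (x0 + 1) = Fin.last m := by
    rw [sub_eq_iff_eq_add, add_comm x0 1, ← add_assoc]
    simp
  unfold cycPos
  rw [this]
  simp

lemma cycPos_le (n : ℕ) [NeZero n] (x0 x : Fin n) : cycPos n x0 x ≤ cycPos n x0 x0 := by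
  rw [cycPos_last]
  unfold cycPos
  omega

lemma cycPos_succ (n : ℕ) [NeZero n] (x0 x : Fin n) (h : x ≠ x0) :
    cycPos n x0 (x + 1) = cycPos n x0 x + 1 := by
  have hlt : cycPos n x0 x < n - 1 := by
    rw [← cycPos_last n x0]
    exact lt_of_le_of_ne (cycPos_le n x0 x) (fun e => h (cycPos_inj n x0 _ _ e))
  unfold cycPos at *
  have e : x + 1 - (x0 + 1) = (x - (x0 + 1)) + 1 := by abel
  rw [e, Fin.val_add_one_of_lt']
  omega

/-- Partial sums along the cut cycle. -/
def cycSum (n : ℕ) [NeZero n] (x0 : Fin n) (z : Fin n → ℤ) (y : Fin n) : ℤ :=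
  ∑ x, if cycPos n x0 x ≤ cycPos n x0 y then z x else 0

lemma cycSum_last (n : ℕ) [NeZero n] (x0 : Fin n) (z : Fin n → ℤ) :
    cycSum n x0 z x0 = ∑ x, z x := by
  unfold cycSum
  exact Finset.sum_congr rfl fun x _ => if_pos (cycPos_le n x0 x)

lemma cycSum_succ (n : ℕ) [NeZero n] (x0 : Fin n) (z : Fin n → ℤ) (hz : ∑ x, z x = 0)
    (x : Fin n) : cycSum n x0 z (x + 1) - cycSum n x0 z x = z (x + 1) := by
  by_cases h : x = x0
  · subst h
    rw [cycSum_last, hz, sub_zero]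
    unfold cycSum
    rw [Finset.sum_eq_single (x + 1)]
    · simp
    · intro b _ hb
      rw [if_neg]
      intro hle
      apply hb
      apply cycPos_inj n x
      have : cycPos n x (x + 1) = 0 := by simp [cycPos]
      omega
    · simp
  · unfold cycSum
    rw [← Finset.sum_sub_distrib, Finset.sum_eq_single (x + 1)]
    · have := cycPos_succ n x0 x h
      rw [if_pos le_rfl, if_neg (by omega), sub_zero]
    · intro b _ hb
      have h1 := cycPos_succ n x0 x h
      have h2 : cycPos n x0 b ≠ cycPos n x0 (x + 1) := fun e => hb (cycPos_inj n x0 _ _ e)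
      by_cases h3 : cycPos n x0 b ≤ cycPos n x0 x
      · rw [if_pos h3, if_pos (by omega), sub_self]
      · rw [if_neg h3, if_neg (by omega), sub_self]
    · simp

lemma cycSum_pred (n : ℕ) [NeZero n] (x0 : Fin n) (z : Fin n → ℤ) (hz : ∑ x, z x = 0)
    (x : Fin n) : cycSum n x0 z x - cycSum n x0 z (x - 1) = z x := by
  have := cycSum_succ n x0 z hz (x - 1)
  simpa using this

lemma cycLap_eq (n : ℕ) [NeZero n] (hn : 3 ≤ n) (j l : Fin n) :
    cycLap n j l = (if j = l then 1 else 0) + (if j = l then 1 else 0)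
      - (if j = l - 1 then 1 else 0) - (if j = l + 1 then 1 else 0) := by
  have e0 : (l = j) ↔ (j = l) := eq_comm
  have e1 : (l = j + 1) ↔ (j = l - 1) := by
    rw [eq_sub_iff_add_eq, eq_comm]
  have h1 : (1 : Fin n) ≠ 0 := by
    intro h
    have := congrArg Fin.val h
    rw [Fin.val_one', Fin.val_zero, Nat.mod_eq_of_lt (by omega)] at this
    omega
  have h2 : (1 : Fin n) + 1 ≠ 0 := by
    intro h
    have := congrArg Fin.val h
    rw [Fin.val_add, Fin.val_one', Fin.val_zero, Nat.mod_eq_of_lt (by omega : 1 < n),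
      Nat.mod_eq_of_lt (by omega)] at this
    omega
  unfold cycLap
  simp only [e0, e1]
  by_cases a1 : j = l
  · subst a1
    rw [if_pos rfl, if_pos rfl, if_neg, if_neg]
    · norm_num
    · intro h; exact h1 (by simpa using h)
    · intro h; apply h1; simpa using (eq_sub_iff_add_eq.1 h)
  · rw [if_neg a1, if_neg a1]
    by_cases a2 : j = l - 1
    · rw [if_pos (Or.inl a2), if_pos a2, if_neg]
      · norm_num
      · intro h
        apply h2
        rw [a2] at h
        have : l - 1 + 1 = l + 1 + 1 := by rw [← h]
        rw [sub_add_cancel, add_assoc] at this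
        simpa using this.symm
    · by_cases a3 : j = l + 1
      · rw [if_pos (Or.inr a3), if_neg a2, if_pos a3]; norm_num
      · rw [if_neg, if_neg a2, if_neg a3]
        · norm_num
        · tauto

lemma sum_cycLap (n : ℕ) [NeZero n] (hn : 3 ≤ n) (f : Fin n → ℤ) (l : Fin n) :
    ∑ j, f j * cycLap n j l = (f l - f (l + 1)) - (f (l - 1) - f l) := by
  simp only [cycLap_eq n hn, mul_sub, mul_add, Finset.sum_sub_distrib, Finset.sum_add_distrib,
    mul_ite, mul_one, mul_zero, Finset.sum_ite_eq', Finset.mem_univ, if_true]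
  ring

open Classical in
lemma bPart_eq (n : ℕ) [NeZero n] (S : Set (Fin n)) (l : Fin n) :
    bPart n S l = ∑ j, (if j ∈ S then 1 else 0) * cycLap n j l := by
  unfold bPart
  rw [Finset.sum_apply]
  refine Finset.sum_congr rfl fun j _ => ?_
  split_ifs <;> simp

/-- Lattice vectors are cyclic differences of balanced vectors supported on `E`. -/
lemma lattice_diff (n k : ℕ) [NeZero n] (hn : 3 ≤ n) (V : Fin k → Set (Fin n)) (E : Set (Fin n))
    (hcover : ∀ x : Fin n, ∃ j, x ∈ V j)
    (hdisj : ∀ j₁ j₂ : Fin k, j₁ ≠ j₂ → Disjoint (V j₁) (V j₂))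
    (hall : ∀ x : Fin n, (∃ j, x ∈ V j ∧ x + 1 ∉ V j) → x ∈ E)
    (w : Fin n → ℤ) (hw : w ∈ Submodule.span ℤ (Set.range fun j => bPart n (V j))) :
    ∃ a : Fin n → ℤ, (∀ x, a x ≠ 0 → x ∈ E) ∧ ∑ x, a x = 0 ∧ ∀ x, w x = a x - a (x - 1) := by
  classical
  induction hw using Submodule.span_induction with
  | mem w hw =>
    obtain ⟨j, rfl⟩ := hw
    set f : Fin n → ℤ := fun x => if x ∈ V j then 1 else 0 with hf
    refine ⟨fun x => f x - f (x + 1), ?_, ?_, ?_⟩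
    · intro x hx
      by_cases h1 : x ∈ V j
      · by_cases h2 : x + 1 ∈ V j
        · simp [hf, h1, h2] at hx
        · exact hall x ⟨j, h1, h2⟩
      · by_cases h2 : x + 1 ∈ V j
        · obtain ⟨i, hi⟩ := hcover x
          refine hall x ⟨i, hi, fun h3 => ?_⟩
          have hij : i ≠ j := by rintro rfl; exact h1 hi
          exact Set.disjoint_left.1 (hdisj i j hij) h3 h2
        · simp [hf, h1, h2] at hx
    · rw [Finset.sum_sub_distrib, sub_eq_zero]
      exact (Equiv.sum_comp (Equiv.addRight (1 : Fin n)) f).symm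
    · intro x
      show bPart n (V j) x = _
      rw [bPart_eq, sum_cycLap n hn f x]
      simp
  | zero => exact ⟨0, by simp, by simp, by simp⟩
  | add w₁ w₂ _ _ h₁ h₂ =>
    obtain ⟨a, ha, ha', ha''⟩ := h₁
    obtain ⟨b, hb, hb', hb''⟩ := h₂
    refine ⟨a + b, ?_, ?_, ?_⟩
    · intro x hx
      by_cases h : a x = 0
      · exact hb x (by simpa [h] using hx)
      · exact ha x h
    · simp [Finset.sum_add_distrib, ha', hb']
    · intro x
      simp only [Pi.add_apply, ha'', hb'']; ring
  | smul c w _ h =>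
    obtain ⟨a, ha, ha', ha''⟩ := h
    refine ⟨c • a, ?_, ?_, ?_⟩
    · intro x hx
      exact ha x (fun h => hx (by simp [h]))
    · simp [← Finset.mul_sum, ha']
    · intro x
      simp only [Pi.smul_apply, ha'', smul_eq_mul]; ring

/-- A function on the cycle, constant on parts, gives an element of the lattice. -/
lemma lattice_of_const (n k : ℕ) [NeZero n] (hn : 3 ≤ n) (V : Fin k → Set (Fin n))
    (hcover : ∀ x : Fin n, ∃ j, x ∈ V j)
    (hdisj : ∀ j₁ j₂ : Fin k, j₁ ≠ j₂ → Disjoint (V j₁) (V j₂))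
    (f : Fin n → ℤ) (g : Fin k → ℤ) (hfg : ∀ j, ∀ x ∈ V j, f x = g j) :
    (fun l => (f l - f (l + 1)) - (f (l - 1) - f l)) ∈
      Submodule.span ℤ (Set.range fun j => bPart n (V j)) := by
  classical
  have : (fun l => (f l - f (l + 1)) - (f (l - 1) - f l)) = ∑ j, g j • bPart n (V j) := by
    funext l
    rw [← sum_cycLap n hn f l, Finset.sum_apply]
    simp only [Pi.smul_apply, bPart_eq, smul_eq_mul, Finset.mul_sum]
    rw [Finset.sum_comm]
    refine Finset.sum_congr rfl fun x _ => ?_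
    obtain ⟨i, hi⟩ := hcover x
    rw [Finset.sum_eq_single i]
    · rw [if_pos hi, hfg i x hi]; ring
    · intro b _ hb
      rw [if_neg]
      · ring
      · intro h; exact Set.disjoint_left.1 (hdisj b i hb) h hi
    · simp
  rw [this]
  exact Submodule.sum_mem _ fun j _ => Submodule.smul_mem _ _
    (Submodule.subset_span ⟨j, rfl⟩)

lemma const_on_part (n : ℕ) [NeZero n] (S : Set (Fin n))
    (hconn : ((cycleG n).induce S).Connected) (f : Fin n → ℤ)
    (hf : ∀ x, x ∈ S → x + 1 ∈ S → f x = f (x + 1)) : ∃ c, ∀ x ∈ S, f x = c := by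
  obtain ⟨⟨x0, hx0⟩⟩ := hconn.nonempty
  refine ⟨f x0, fun x hx => ?_⟩
  have hr := hconn.preconnected ⟨x, hx⟩ ⟨x0, hx0⟩
  obtain ⟨p⟩ := hr
  have key : ∀ (y z : S) (_ : ((cycleG n).induce S).Walk y z), f y = f z := by
    intro y z p
    induction p with
    | nil => rfl
    | cons h p ih =>
      rename_i a b c
      rw [← ih]
      have h' : (cycleG n).Adj a b := h
      rw [cycleG, SimpleGraph.fromRel_adj] at h'
      rcases h'.2 with h1 | h1
      · rw [h1]; exact hf a a.2 (h1 ▸ b.2)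
      · rw [h1]; exact (hf b b.2 (h1 ▸ a.2)).symm
  exact key _ _ p

lemma exists_internal (n : ℕ) [NeZero n] (S : Set (Fin n))
    (hconn : ((cycleG n).induce S).Connected) (hnt : S.Nontrivial) :
    ∃ x, x ∈ S ∧ x + 1 ∈ S := by
  by_contra! hcon
  obtain ⟨x, hx, y, hy, hxy⟩ := hnt
  obtain ⟨c, hc⟩ := const_on_part n S hconn (fun z => (z.val : ℤ))
    (fun z h1 h2 => absurd h2 (hcon z h1))
  have := (hc x hx).trans (hc y hy).symm
  apply hxy
  ext
  exact_mod_cast this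

open Classical in
/-- The variable attached to a vertex: own variable for non-relevant ones, a common one else. -/
def cutVar (n : ℕ) (E : Set (Fin n)) (y : Fin n) : Option (Fin n) :=
  if y ∈ E then none else some y

/-- Exponent vector of the image of `x_v` under the parametrization. -/
def parExp (n : ℕ) [NeZero n] (E : Set (Fin n)) (x0 v : Fin n) : Option (Fin n) →₀ ℕ :=
  ∑ y, if cycPos n x0 v ≤ cycPos n x0 y then Finsupp.single (cutVar n E y) 1 else 0

/-- The parametrization. -/
def parHom (n : ℕ) (K : Type*) [NeZero n] [Field K] (E : Set (Fin n)) (x0 : Fin n) :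
    MvPolynomial (Fin n) K →ₐ[K] MvPolynomial (Option (Fin n)) K :=
  aeval fun v => monomial (parExp n E x0 v) 1

lemma parExp_succ (n : ℕ) [NeZero n] (E : Set (Fin n)) (x0 x : Fin n) (hx0 : x0 ∉ E)
    (hx : x ∈ E) : parExp n E x0 x = parExp n E x0 (x + 1) + Finsupp.single none 1 := by
  have hne : x ≠ x0 := by rintro rfl; exact hx0 hx
  have hs := cycPos_succ n x0 x hne
  have e : (Finsupp.single none 1 : Option (Fin n) →₀ ℕ) =
      ∑ y, if y = x then Finsupp.single (cutVar n E y) 1 else 0 := by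
    simp [cutVar, hx]
  rw [e]
  unfold parExp
  rw [← Finset.sum_add_distrib]
  refine Finset.sum_congr rfl fun y _ => ?_
  by_cases h : y = x
  · subst h
    rw [if_pos le_rfl, if_neg (by omega), if_pos rfl, zero_add]
  · have h2 : cycPos n x0 y ≠ cycPos n x0 x := fun e => h (cycPos_inj n x0 _ _ e)
    rw [if_neg h, add_zero]
    by_cases h3 : cycPos n x0 x ≤ cycPos n x0 y
    · rw [if_pos h3, if_pos (by omega)]
    · rw [if_neg h3, if_neg (by omega)]

lemma parHom_minor (n : ℕ) (K : Type*) [NeZero n] [Field K] (E : Set (Fin n)) (x0 x y : Fin n)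
    (hx0 : x0 ∉ E) (hx : x ∈ E) (hy : y ∈ E) :
    parHom n K E x0 (X x * X (y + 1) - X y * X (x + 1)) = 0 := by
  simp only [parHom, map_sub, map_mul, aeval_X, monomial_mul]
  rw [parExp_succ n E x0 x hx0 hx, parExp_succ n E x0 y hx0 hy, sub_eq_zero]
  rw [add_right_comm, add_right_comm (parExp n E x0 (y + 1)),
    add_comm (parExp n E x0 (x + 1))]

/-- Total exponent of the image of a monomial. -/
def parTot (n : ℕ) [NeZero n] (E : Set (Fin n)) (x0 : Fin n) (u : Fin n → ℕ) :
    Option (Fin n) →₀ ℕ := ∑ v, u v • parExp n E x0 v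

lemma parHom_monoV (n : ℕ) (K : Type*) [NeZero n] [Field K] (E : Set (Fin n)) (x0 : Fin n)
    (u : Fin n → ℕ) : parHom n K E x0 (monoV n K u) = monomial (parTot n E x0 u) 1 := by
  simp only [parHom, monoV, parTot, map_prod, map_pow, aeval_X, monomial_pow, one_pow]
  rw [← monomial_sum_one]

open Classical in
lemma parTot_apply (n : ℕ) [NeZero n] (E : Set (Fin n)) (x0 : Fin n) (u : Fin n → ℕ)
    (o : Option (Fin n)) : ((parTot n E x0 u o : ℕ) : ℤ) =
      ∑ y, if cutVar n E y = o then cycSum n x0 (fun v => (u v : ℤ)) y else 0 := by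
  unfold parTot parExp cycSum
  simp only [Finsupp.finsetSum_apply, Finsupp.smul_apply, smul_eq_mul, Nat.cast_sum,
    Nat.cast_mul, Finset.mul_sum]
  rw [Finset.sum_comm]
  refine Finset.sum_congr rfl fun y _ => ?_
  split_ifs with h
  · refine Finset.sum_congr rfl fun v _ => ?_
    split_ifs <;> simp [h]
  · apply Finset.sum_eq_zero
    intro v _
    split_ifs <;> simp [Finsupp.single_apply, h]

lemma parTot_eq (n : ℕ) [NeZero n] (E : Set (Fin n)) (x0 : Fin n) (hx0 : x0 ∉ E)
    (u v : Fin n → ℕ) (h : parTot n E x0 u = parTot n E x0 v) :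
    ∃ a : Fin n → ℤ, (∀ x, a x ≠ 0 → x ∈ E) ∧ ∑ x, a x = 0 ∧
      ∀ x, (u x : ℤ) - v x = a x - a (x - 1) := by
  classical
  set z : Fin n → ℤ := fun x => (u x : ℤ) - v x with hz
  have hsub : ∀ y, cycSum n x0 z y =
      cycSum n x0 (fun v => (u v : ℤ)) y - cycSum n x0 (fun x => (v x : ℤ)) y := by
    intro y
    unfold cycSum
    rw [← Finset.sum_sub_distrib]
    refine Finset.sum_congr rfl fun x _ => ?_
    split_ifs <;> simp [hz]
  have hfun : ∀ o, ∑ y, (if cutVar n E y = o then cycSum n x0 z y else 0) = 0 := by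
    intro o
    have h1 := parTot_apply n E x0 u o
    have h2 := parTot_apply n E x0 v o
    rw [h] at h1
    have h3 := h1.symm.trans h2
    rw [← sub_eq_zero, ← Finset.sum_sub_distrib] at h3
    refine Eq.trans ?_ h3
    refine Finset.sum_congr rfl fun x _ => ?_
    split_ifs <;> simp [hsub]
  have hoff : ∀ y, y ∉ E → cycSum n x0 z y = 0 := by
    intro y hy
    have := hfun (some y)
    rw [Finset.sum_eq_single y] at this
    · simpa [cutVar, hy] using this
    · intro b _ hb
      rw [if_neg]
      unfold cutVar
      split_ifs
      · simp
      · simpa using hb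
    · simp
  have hz0 : ∑ x, z x = 0 := by rw [← cycSum_last n x0 z]; exact hoff x0 hx0
  refine ⟨cycSum n x0 z, ?_, ?_, ?_⟩
  · intro x hx
    by_contra hE
    exact hx (hoff x hE)
  · rw [← hfun none]
    refine Finset.sum_congr rfl fun x _ => ?_
    by_cases hE : x ∈ E
    · simp [cutVar, hE]
    · simp [cutVar, hE, hoff x hE]
  · intro x
    exact (cycSum_pred n x0 z hz0 x).symm

lemma monoV_eq_monomial (n : ℕ) (K : Type*) [Field K] (u : Fin n →₀ ℕ) :
    monoV n K u = monomial u 1 := by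
  rw [monomial_eq, map_one, one_mul, Finsupp.prod_fintype _ _ (by simp)]
  rfl

/-- The kernel of a monomial map is contained in any ideal containing its binomials. -/
lemma parHom_ker_le (n : ℕ) (K : Type*) [NeZero n] [Field K] (E : Set (Fin n)) (x0 : Fin n)
    (J : Ideal (MvPolynomial (Fin n) K))
    (hJ : ∀ u v : Fin n → ℕ, parTot n E x0 u = parTot n E x0 v →
      monoV n K u - monoV n K v ∈ J) (f : MvPolynomial (Fin n) K)
    (hf : parHom n K E x0 f = 0) : f ∈ J := by
  classical
  let ψ : MvPolynomial (Option (Fin n)) K →ₗ[K] (MvPolynomial (Fin n) K ⧸ J) :=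
    (basisMonomials (Option (Fin n)) K).constr K fun m =>
      if h : ∃ u, parTot n E x0 u = m then Ideal.Quotient.mk J (monoV n K h.choose) else 0
  have hψ : ∀ u, ψ (monomial (parTot n E x0 u) 1) = Ideal.Quotient.mk J (monoV n K u) := by
    intro u
    have h : ∃ u', parTot n E x0 u' = parTot n E x0 u := ⟨u, rfl⟩
    have e : ψ (monomial (parTot n E x0 u) 1) =
      if h : ∃ u', parTot n E x0 u' = parTot n E x0 u then
        Ideal.Quotient.mk J (monoV n K h.choose) else 0 := by
      have := (basisMonomials (Option (Fin n)) K).constr_basis K (fun m =>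
        if h : ∃ u, parTot n E x0 u = m then Ideal.Quotient.mk J (monoV n K h.choose) else 0)
        (parTot n E x0 u)
      rw [coe_basisMonomials] at this
      exact this
    rw [e, dif_pos h, Ideal.Quotient.eq]
    exact hJ _ _ h.choose_spec
  have hcomp : ψ ∘ₗ (parHom n K E x0).toLinearMap = (Ideal.Quotient.mkₐ K J).toLinearMap := by
    apply (basisMonomials (Fin n) K).ext
    intro u
    rw [coe_basisMonomials]
    simp only [LinearMap.comp_apply, AlgHom.toLinearMap_apply]
    rw [← monoV_eq_monomial, parHom_monoV, hψ]
    rfl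
  have := congrArg (fun g => g f) hcomp
  simp only [LinearMap.comp_apply, AlgHom.toLinearMap_apply, hf, map_zero] at this
  exact Ideal.Quotient.eq_zero_iff_mem.1 this.symm

end Helpers

/-- For a parcycle `(C_n, Π)` (with `k ≥ 2`, `K` algebraically closed)
the toppling ideal `I_Π` equals the ideal of `2 × 2` minors of the matrix `A_{(C_n,Π)}`
(columns the directed relevant edges `(p_i, q_i)` in traversal order); moreover if
`|V_i| ≥ 2` for some `i`, then `I_Π` is prime, so `R_n/I_Π` is a domain. -/
theorem statement_8 (K : Type*) [Field K] [IsAlgClosed K] (n k : ℕ) [NeZero n]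
    (hn : 3 ≤ n) (hk : 2 ≤ k)
    (V : Fin k → Set (Fin n))
    (hcover : ∀ x : Fin n, ∃ j, x ∈ V j)
    (hdisj : ∀ j₁ j₂ : Fin k, j₁ ≠ j₂ → Disjoint (V j₁) (V j₂))
    (hconn : ∀ j, ((cycleG n).induce (V j)).Connected)
    (hsink : (⟨n - 1, by omega⟩ : Fin n) ∈ V ⟨k - 1, by omega⟩)
    (p q : Fin k → Fin n)
    (hpq : ∀ c, q c = p c + 1)
    (hcross : ∀ c j, p c ∈ V j → q c ∉ V j)
    (hall : ∀ x : Fin n, (∃ j, x ∈ V j ∧ x + 1 ∉ V j) → ∃ c, p c = x)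
    (hinjp : Function.Injective p)
    (horder : ∃ v₀, v₀ ∈ V ⟨k - 1, by omega⟩ ∧
      StrictMono fun c : Fin k => ((p c - v₀ : Fin n) : ℕ)) :
    topplingPar n k K V
      = Ideal.span { f | ∃ c₁ c₂ : Fin k, c₁ < c₂ ∧
          f = X (p c₁) * X (q c₂) - X (p c₂) * X (q c₁) } ∧
    ((∃ j, (V j).Nontrivial) →
      (topplingPar n k K V).IsPrime ∧
      IsDomain (MvPolynomial (Fin n) K ⧸ topplingPar n k K V)) := by
  classical
  set J : Ideal (MvPolynomial (Fin n) K) := Ideal.span { f | ∃ c₁ c₂ : Fin k, c₁ < c₂ ∧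
          f = X (p c₁) * X (q c₂) - X (p c₂) * X (q c₁) } with hJdef
  have hJ : ∀ x y, x ∈ Set.range p → y ∈ Set.range p →
      (X x * X (y + 1) - X y * X (x + 1) : MvPolynomial (Fin n) K) ∈ J := by
    rintro _ _ ⟨c, rfl⟩ ⟨d, rfl⟩
    rw [← hpq, ← hpq]
    rcases lt_trichotomy c d with h | h | h
    · exact Ideal.subset_span ⟨c, d, h, rfl⟩
    · subst h; simp
    · rw [← neg_sub]
      exact J.neg_mem (Ideal.subset_span ⟨d, c, h, rfl⟩)
  have hmoves := fun a u v => cyc_moves n K (Set.range p) J hJ _ a u v rfl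
  have hEq : topplingPar n k K V = J := by
    apply le_antisymm
    · unfold topplingPar latticeIdeal
      rw [Ideal.span_le]
      rintro f ⟨u, v, huv, rfl⟩
      obtain ⟨a, ha, ha', ha''⟩ := lattice_diff n k hn V (Set.range p) hcover hdisj
        (fun x hx => hall x hx) _ huv
      exact hmoves a u v ha ha' (fun x => ha'' x)
    · rw [hJdef, Ideal.span_le]
      rintro f ⟨c, d, -, rfl⟩
      unfold topplingPar latticeIdeal
      apply Ideal.subset_span
      refine ⟨Pi.single (p c) 1 + Pi.single (q d) 1, Pi.single (p d) 1 + Pi.single (q c) 1, ?_, ?_⟩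
      · set b : Fin n → ℤ := fun x => (if x = p c then 1 else 0) - (if x = p d then 1 else 0)
          with hb
        have hb0 : ∑ x, b x = 0 := by simp [hb]
        set s := cycSum n 0 b with hs
        set f : Fin n → ℤ := fun x => - s (x - 1) with hf
        have hfd : ∀ x, f x - f (x + 1) = b x := by
          intro x
          have := cycSum_pred n 0 b hb0 x
          simp only [hf, add_sub_cancel_right]
          rw [← this]; ring
        have hconst : ∀ j, ∃ g, ∀ x ∈ V j, f x = g := by
          intro j
          apply const_on_part n (V j) (hconn j) f
          intro x h1 h2
          have hne : ∀ e, x ≠ p e := by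
            rintro e rfl
            exact hcross e j h1 (by rw [hpq]; exact h2)
          have := hfd x
          simp only [hb, if_neg (hne c), if_neg (hne d)] at this
          linarith
        choose g hg using hconst
        have hmem := lattice_of_const n k hn V hcover hdisj f g hg
        convert hmem using 1
        funext l
        have h2 := hfd (l - 1)
        rw [sub_add_cancel] at h2
        rw [hfd, h2]
        simp only [hb, Pi.sub_apply, Pi.add_apply, Pi.single_apply, hpq, sub_eq_iff_eq_add]
        push_cast
        ring
      · have h1 := monoV_add n K (Pi.single (p c) 1) (Pi.single (q d) 1)
        have h2 := monoV_add n K (Pi.single (p d) 1) (Pi.single (q c) 1)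
        rw [monoV_single, monoV_single] at h1 h2
        rw [← h1, ← h2]
        rfl
  refine ⟨hEq, ?_⟩
  rintro ⟨j, hj⟩
  obtain ⟨x0, hx, hx'⟩ := exists_internal n (V j) (hconn j) hj
  have hx0 : x0 ∉ Set.range p := by
    rintro ⟨c, rfl⟩
    exact hcross c j hx (by rw [hpq]; exact hx')
  have hker : J = RingHom.ker (parHom n K (Set.range p) x0) := by
    apply le_antisymm
    · rw [hJdef, Ideal.span_le]
      rintro f ⟨c, d, -, rfl⟩
      rw [hpq, hpq]
      exact parHom_minor n K _ x0 _ _ hx0 ⟨c, rfl⟩ ⟨d, rfl⟩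
    · intro f hf
      apply parHom_ker_le n K (Set.range p) x0 J _ f hf
      intro u v huv
      obtain ⟨a, ha, ha', ha''⟩ := parTot_eq n _ x0 hx0 u v huv
      exact hmoves a u v ha ha' ha''
  have hprime : (topplingPar n k K V).IsPrime := by
    rw [hEq, hker]
    exact RingHom.ker_isPrime _
  exact ⟨hprime, (Ideal.Quotient.isDomain_iff_prime _).2 hprime⟩
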